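/- arXiv:2012.05485 — 2 statements merged into one kernel-verified Lean document; each statement's English description precedes it below -/
import Mathlib

section
/- Let ABC be a triangle with incenter I and let P be any point. Let A_P be the pedal of P on line BC, and let A', B', C' be the pedals of P on lines AI, BI, CI; assume A', B', C' are affinely independent with orthocenter H'. Let H_A' be the reflection of H' in line B'C'. Then P, A_P and H_A' are collinear. -/
open EuclideanGeometry

noncomputable section

/-- The Euclidean plane. -/
abbrev Pt := EuclideanSpace ℝ (Fin 2)

/-- The pedal (orthogonal projection) of `P` on the line `XY` (the affine span of `{X, Y}`). -/
def pedal (P X Y : Pt) : Pt :=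
  EuclideanGeometry.orthogonalProjection (affineSpan ℝ {X, Y}) P

/-- The reflection of `P` in the line `XY` (the affine span of `{X, Y}`). -/
def lineReflect (X Y P : Pt) : Pt :=
  EuclideanGeometry.reflection (affineSpan ℝ {X, Y}) P

/-- The circumcenter of the triangle `ABC`. -/
def circumcenter3 (A B C : Pt) (h : AffineIndependent ℝ ![A, B, C]) : Pt :=
  (⟨![A, B, C], h⟩ : Affine.Triangle ℝ Pt).circumcenter

/-- The circumradius of the triangle `ABC`. -/
def circumradius3 (A B C : Pt) (h : AffineIndependent ℝ ![A, B, C]) : ℝ :=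
  (⟨![A, B, C], h⟩ : Affine.Triangle ℝ Pt).circumradius

/-- The orthocenter of the triangle `ABC`. -/
def orthocenter3 (A B C : Pt) (h : AffineIndependent ℝ ![A, B, C]) : Pt :=
  Affine.Triangle.orthocenter (⟨![A, B, C], h⟩ : Affine.Triangle ℝ Pt)

/-- The incenter of the triangle `ABC`: `(a•A + b•B + c•C)/(a+b+c)` with
`a = dist B C`, `b = dist C A`, `c = dist A B`. -/
def incenter3 (A B C : Pt) : Pt :=
  (dist B C + dist C A + dist A B)⁻¹ •
    (dist B C • A + dist C A • B + dist A B • C)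

/-- The centroid of the triangle `ABC`. -/
def centroid3 (A B C : Pt) : Pt := (3 : ℝ)⁻¹ • (A + B + C)

/-- The Nagel point of the triangle `ABC`:
`((s−a)/s)•A + ((s−b)/s)•B + ((s−c)/s)•C` with `s` the semiperimeter. -/
def nagelPoint (A B C : Pt) : Pt :=
  (((dist B C + dist C A + dist A B) / 2 - dist B C) /
      ((dist B C + dist C A + dist A B) / 2)) • A +
    (((dist B C + dist C A + dist A B) / 2 - dist C A) /
      ((dist B C + dist C A + dist A B) / 2)) • B +
    (((dist B C + dist C A + dist A B) / 2 - dist A B) /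
      ((dist B C + dist C A + dist A B) / 2)) • C

/-!
In a complex coordinate the reflection in a line through `a` with direction `d` is
`z ↦ a + (d / conj d) * conj (z - a)`. Let `e`, `f`, `g` be the unit vectors along `AB`, `AC`, `BC`;
the bisectors at `A`, `B`, `C` have `d / conj d` equal to `e * f`, `-(e * g)`, `f * g`. Hence, with
`q = conj (P - I)` and `M` the midpoint of `IP`, the pedals of `P` on the bisectors are
`M + e * f * q / 2`, `M - e * g * q / 2` and `M + f * g * q / 2`, on the circle with diameter `IP`.

If `u`, `v`, `w` are the vertices of a triangle whose circumcenter is the origin, the reflection of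
its orthocenter `u + v + w` in the side `vw` is `-(v * w) / u`. For the pedal triangle this gives
`M + g ^ 2 * q / 2`, which is the pedal of `P` on the parallel to `BC` through `I`. The pedal of `P`
on `BC` lies on the same perpendicular.
-/

open ComplexConjugate
open NormedSpace (normalize normalize_neg norm_smul_normalize norm_normalize_eq_one_iff)

lemma direction_line_add {k V : Type*} [Ring k] [AddCommGroup V] [Module k V] (p v : V) :
    line[k, p, p + v].direction = k ∙ v := by
  rw [direction_affineSpan, vectorSpan_pair_rev, vsub_eq_sub, add_sub_cancel_left]

lemma sub_ne_zero_of_affineIndependent {k V : Type*} [Ring k] [Nontrivial k] [AddCommGroup V]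
    [Module k V] {A B C : V} (h : AffineIndependent k ![A, B, C]) : B - A ≠ 0 :=
  sub_ne_zero.2 (h.injective.ne (show (1 : Fin 3) ≠ 0 by decide))

section Projection

variable {V P : Type*} [NormedAddCommGroup V] [InnerProductSpace ℝ V] [MetricSpace P]
  [NormedAddTorsor V P]

lemma midpoint_reflection (s : AffineSubspace ℝ P) [Nonempty s]
    [s.direction.HasOrthogonalProjection] (p : P) :
    midpoint ℝ p (reflection s p) = orthogonalProjection s p := by
  rw [midpoint_eq_iff, AffineEquiv.pointReflection_apply, reflection_apply']

lemma dist_orthogonalProjection_midpoint {s : AffineSubspace ℝ P} [Nonempty s]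
    [s.direction.HasOrthogonalProjection] {a : P} (ha : a ∈ s) (p : P) :
    dist (orthogonalProjection s p : P) (midpoint ℝ a p) = dist a p / 2 := by
  rw [← midpoint_reflection, midpoint_comm, dist_eq_norm_vsub V, midpoint_vsub_midpoint, vsub_self,
    midpoint_eq_smul_add, add_zero, norm_smul, ← dist_eq_norm_vsub, dist_comm,
    dist_reflection_eq_of_mem s ha]
  norm_num
  ring

lemma collinear_orthogonalProjection_of_direction_eq [Fact (Module.finrank ℝ V = 2)]
    {s₁ s₂ : AffineSubspace ℝ P} [Nonempty s₁] [Nonempty s₂]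
    [s₁.direction.HasOrthogonalProjection] [s₂.direction.HasOrthogonalProjection]
    (hs₁ : Module.finrank ℝ s₁.direction = 1) (hs : s₁.direction = s₂.direction) (p : P) :
    Collinear ℝ {p, (orthogonalProjection s₁ p : P), (orthogonalProjection s₂ p : P)} := by
  have hfin : FiniteDimensional ℝ V := .of_fact_finrank_eq_two
  have horth : Module.finrank ℝ s₁.directionᗮ = 1 := by
    have h := s₁.direction.finrank_add_finrank_orthogonal
    rw [hs₁, Fact.out (p := Module.finrank ℝ V = 2)] at h
    omega
  rw [collinear_iff_finrank_le_one, ← horth,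
    vectorSpan_eq_span_vsub_set_right ℝ (Set.mem_insert p _)]
  refine Submodule.finrank_mono (Submodule.span_le.2 ?_)
  rintro _ ⟨x, rfl | rfl | rfl, rfl⟩
  · simp
  · exact orthogonalProjection_vsub_mem_direction_orthogonal s₁ p
  · rw [hs]
    exact orthogonalProjection_vsub_mem_direction_orthogonal s₂ p

lemma orthocenter_vsub_eq_sum_vsub_of_dist_eq [Fact (Module.finrank ℝ V = 2)]
    (t : Affine.Triangle ℝ P) {o : P} {r : ℝ} (h : ∀ i, dist (t.points i) o = r) :
    t.orthocenter -ᵥ o = ∑ i, (t.points i -ᵥ o) := by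
  have hfin : FiniteDimensional ℝ V := .of_fact_finrank_eq_two
  have htop : affineSpan ℝ (Set.range t.points) = ⊤ := by
    rw [t.independent.affineSpan_eq_top_iff_card_eq_finrank_add_one,
      Fact.out (p := Module.finrank ℝ V = 2), Fintype.card_fin]
  rw [t.eq_circumcenter_of_dist_eq (htop ▸ AffineSubspace.mem_top ℝ V o) h]
  exact t.orthocenter_vsub_circumcenter_eq_sum_vsub

end Projection

lemma mul_conj_eq_mul_conj_of_norm_eq {z w : ℂ} (h : ‖z‖ = ‖w‖) : z * conj z = w * conj w := by
  rw [Complex.mul_conj', Complex.mul_conj', h]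

lemma sub_div_conj_sub_of_norm_eq {z w : ℂ} (h : ‖z‖ = ‖w‖) (hzw : z ≠ w) :
    (z - w) / conj (z - w) = -z / conj w := by
  have hw : w ≠ 0 := by
    rintro rfl
    exact hzw (norm_eq_zero.1 (h.trans norm_zero))
  rw [div_eq_div_iff ((map_ne_zero _).2 (sub_ne_zero.2 hzw)) ((map_ne_zero _).2 hw), map_sub]
  linear_combination mul_conj_eq_mul_conj_of_norm_eq h

lemma add_sub_div_conj_sub_mul_conj_add {u v w : ℂ} (huw : ‖u‖ = ‖w‖) (hvw : ‖v‖ = ‖w‖)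
    (hne : v ≠ w) :
    v + (v - w) / conj (v - w) * conj (u + w) = -(v * w / u) := by
  have hw : w ≠ 0 := by
    rintro rfl
    exact hne (norm_eq_zero.1 (hvw.trans norm_zero))
  have hu : u ≠ 0 := by
    rwa [← norm_ne_zero_iff, huw, norm_ne_zero_iff]
  have hcw : conj w ≠ 0 := (map_ne_zero _).2 hw
  rw [sub_div_conj_sub_of_norm_eq hvw hne, map_add]
  field_simp
  linear_combination -v * mul_conj_eq_mul_conj_of_norm_eq huw

lemma add_div_conj_add_of_norm_eq_one {z w : ℂ} (hz : ‖z‖ = 1) (hw : ‖w‖ = 1) (hzw : z + w ≠ 0) :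
    (z + w) / conj (z + w) = z * w := by
  have h := sub_div_conj_sub_of_norm_eq (w := -w) (by rw [norm_neg, hz, hw])
    (fun h ↦ hzw (eq_neg_iff_add_eq_zero.1 h))
  rw [sub_neg_eq_add] at h
  rw [h, map_neg, neg_div_neg_eq, ← Complex.inv_eq_conj hw, div_inv_eq_mul]

section ComplexCoordinates

variable {V : Type*} [NormedAddCommGroup V] [InnerProductSpace ℝ V] (φ : V →ₗᵢ[ℝ] ℂ)

lemma map_reflection_span_singleton {u : V} (hu : u ≠ 0) (v : V) :
    φ ((ℝ ∙ u).reflection v) = φ u / conj (φ u) * conj (φ v) := by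
  have hφu : φ u ≠ 0 := (map_ne_zero_iff φ φ.injective).2 hu
  have hφu' : conj (φ u) ≠ 0 := (map_ne_zero _).2 hφu
  have hnorm : (‖u‖ : ℂ) ^ 2 = φ u * conj (φ u) := by rw [Complex.mul_conj', φ.norm_map]
  have hinner : (inner ℝ u v : ℂ) = (φ v * conj (φ u) + φ u * conj (φ v)) / 2 := by
    rw [← φ.inner_map_map, Complex.inner, Complex.re_eq_add_conj, map_mul, Complex.conj_conj,
      mul_comm (conj (φ v))]
  rw [Submodule.reflection_singleton_apply, map_sub, map_nsmul, map_smul, Complex.real_smul,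
    Complex.ofReal_div, hinner, Complex.ofReal_pow]
  simp only [RCLike.ofReal_real_eq_id, id_eq]
  rw [hnorm, nsmul_eq_mul]
  field

variable {s : AffineSubspace ℝ V} [Nonempty s] [s.direction.HasOrthogonalProjection] {a u : V}

lemma map_reflection_sub (ha : a ∈ s) (hs : s.direction = ℝ ∙ u) (hu : u ≠ 0) (p : V) :
    φ (reflection s p - a) = φ u / conj (φ u) * conj (φ (p - a)) := by
  rw [reflection_apply_of_mem s p ha, vsub_eq_sub, vadd_eq_add, add_sub_cancel_right]
  simp only [hs]
  exact map_reflection_span_singleton φ hu _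

lemma map_orthogonalProjection_sub_midpoint (ha : a ∈ s) (hs : s.direction = ℝ ∙ u) (hu : u ≠ 0)
    (p : V) :
    φ (orthogonalProjection s p - midpoint ℝ a p) =
      φ u / conj (φ u) * conj (φ (p - a)) / 2 := by
  rw [← midpoint_reflection, midpoint_comm a, ← vsub_eq_sub, midpoint_vsub_midpoint, vsub_self,
    vsub_eq_sub, midpoint_eq_smul_add, zero_add, map_smul, map_reflection_sub φ ha hs hu,
    Complex.real_smul, invOf_eq_inv]
  push_cast
  ring

lemma map_reflection_orthocenter_sub [Fact (Module.finrank ℝ V = 2)] (t : Affine.Triangle ℝ V)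
    {o : V} {r : ℝ} (h : ∀ i, dist (t.points i) o = r) :
    φ (reflection line[ℝ, t.points 1, t.points 2] t.orthocenter - o) =
      -(φ (t.points 1 - o) * φ (t.points 2 - o) / φ (t.points 0 - o)) := by
  have hne : t.points 1 ≠ t.points 2 := t.independent.injective.ne (by decide)
  have hnorm (i j : Fin 3) : ‖φ (t.points i - o)‖ = ‖φ (t.points j - o)‖ := by
    rw [φ.norm_map, φ.norm_map, ← dist_eq_norm, ← dist_eq_norm, h, h]
  have hdir : line[ℝ, t.points 1, t.points 2].direction = ℝ ∙ (t.points 1 - t.points 2) :=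
    (direction_affineSpan ℝ _).trans (vectorSpan_pair ℝ _ _)
  have hside : φ (t.points 1 - t.points 2) = φ (t.points 1 - o) - φ (t.points 2 - o) := by
    rw [← map_sub, sub_sub_sub_cancel_right]
  have hsum : t.orthocenter - o = t.points 0 - o + (t.points 1 - o) + (t.points 2 - o) :=
    (orthocenter_vsub_eq_sum_vsub_of_dist_eq t h).trans (Fin.sum_univ_three _)
  have horth : φ (t.orthocenter - t.points 1) = φ (t.points 0 - o) + φ (t.points 2 - o) := by
    rw [← sub_sub_sub_cancel_right _ _ o, hsum, ← map_add]
    abel_nf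
  rw [← sub_add_sub_cancel _ (t.points 1), add_comm, map_add φ,
    map_reflection_sub φ (left_mem_affineSpan_pair ℝ _ _) hdir (sub_ne_zero.2 hne), horth, hside]
  exact add_sub_div_conj_sub_mul_conj_add (hnorm 0 2) (hnorm 1 2)
    (φ.injective.ne (sub_left_injective.ne hne))

lemma norm_map_normalize {v : V} (hv : v ≠ 0) : ‖φ (normalize v)‖ = 1 := by
  rwa [φ.norm_map, norm_normalize_eq_one_iff]

lemma map_div_conj_map_eq_sq {v : V} (hv : v ≠ 0) : φ v / conj (φ v) = φ (normalize v) ^ 2 := by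
  have hv' : (‖v‖ : ℂ) ≠ 0 := Complex.ofReal_ne_zero.2 (norm_ne_zero_iff.2 hv)
  conv_lhs => rw [← norm_smul_normalize v]
  rw [map_smul, Complex.real_smul, map_mul, Complex.conj_ofReal, mul_div_mul_left _ _ hv',
    ← Complex.inv_eq_conj (norm_map_normalize φ hv), div_inv_eq_mul, sq]

end ComplexCoordinates

section Incenter

variable {V : Type*} [NormedAddCommGroup V] [NormedSpace ℝ V]

/-- The point with barycentric coordinates `(BC : CA : AB)` with respect to `A`, `B`, `C`. It is the
incenter of the triangle `ABC` when the norm is Euclidean, and `incenter3` is the case `V = Pt`. -/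
def barycentricIncenter (A B C : V) : V :=
  (dist B C + dist C A + dist A B)⁻¹ •
    (dist B C • A + dist C A • B + dist A B • C)

lemma barycentricIncenter_rotate (A B C : V) :
    barycentricIncenter B C A = barycentricIncenter A B C := by
  unfold barycentricIncenter
  congr 1
  · congr 1
    ring
  · abel

lemma barycentricIncenter_sub {A B : V} (hAB : A ≠ B) (C : V) :
    barycentricIncenter A B C - A =
      (dist C A * dist A B / (dist B C + dist C A + dist A B)) •
        (normalize (B - A) + normalize (C - A)) := by
  have hsum : dist B C + dist C A + dist A B ≠ 0 := by
    have := dist_pos.2 hAB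
    positivity
  have hB : dist A B • normalize (B - A) = B - A := by
    rw [dist_comm, dist_eq_norm, norm_smul_normalize]
  have hC : dist C A • normalize (C - A) = C - A := by rw [dist_eq_norm, norm_smul_normalize]
  calc
    barycentricIncenter A B C - A =
        (dist B C + dist C A + dist A B)⁻¹ • (dist C A • (B - A) + dist A B • (C - A)) := by
      rw [eq_inv_smul_iff₀ hsum, smul_sub, barycentricIncenter, smul_inv_smul₀ hsum]
      module
    _ = _ := by
      rw [div_eq_inv_mul, mul_smul]
      congr 1
      rw [mul_smul, smul_add, smul_add, hB, smul_comm (dist C A) (dist A B), hC]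

lemma normalize_add_normalize_ne_zero {A B C : V} (h : AffineIndependent ℝ ![A, B, C]) :
    normalize (B - A) + normalize (C - A) ≠ 0 := by
  intro hzero
  refine affineIndependent_iff_not_collinear_set.1 h ?_
  rw [collinear_iff_of_mem (Set.mem_insert A _)]
  refine ⟨normalize (B - A), ?_⟩
  simp only [Set.mem_insert_iff, Set.mem_singleton_iff, forall_eq_or_imp, forall_eq]
  refine ⟨⟨0, by rw [zero_smul, zero_vadd]⟩, ⟨‖B - A‖, ?_⟩, ⟨-‖C - A‖, ?_⟩⟩
  · rw [norm_smul_normalize, vadd_eq_add, sub_add_cancel]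
  · rw [eq_neg_of_add_eq_zero_left hzero, neg_smul_neg, norm_smul_normalize, vadd_eq_add,
      sub_add_cancel]

lemma direction_line_barycentricIncenter {A B C : V} (h : AffineIndependent ℝ ![A, B, C]) :
    line[ℝ, A, barycentricIncenter A B C].direction =
      ℝ ∙ (normalize (B - A) + normalize (C - A)) := by
  have hAB : A ≠ B := (sub_ne_zero.1 (sub_ne_zero_of_affineIndependent h)).symm
  have hCA : C ≠ A := sub_ne_zero.1 (sub_ne_zero_of_affineIndependent h.comm_right)
  have hscale : dist C A * dist A B / (dist B C + dist C A + dist A B) ≠ 0 := by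
    have := dist_pos.2 hAB
    have := dist_pos.2 hCA
    positivity
  rw [direction_affineSpan, vectorSpan_pair_rev, vsub_eq_sub, barycentricIncenter_sub hAB,
    Submodule.span_singleton_smul_eq hscale.isUnit]

end Incenter

section Pedal

variable {V : Type*} [NormedAddCommGroup V] [InnerProductSpace ℝ V] (φ : V →ₗᵢ[ℝ] ℂ)
  {A B C I P A' B' C' : V}

lemma map_orthogonalProjection_bisector_sub_midpoint (h : AffineIndependent ℝ ![A, B, C])
    (hI : I = barycentricIncenter A B C) :
    φ (orthogonalProjection line[ℝ, A, I] P - midpoint ℝ I P) =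
      φ (normalize (B - A)) * φ (normalize (C - A)) * conj (φ (P - I)) / 2 := by
  subst hI
  have hB := norm_map_normalize φ (sub_ne_zero_of_affineIndependent h)
  have hC := norm_map_normalize φ (sub_ne_zero_of_affineIndependent h.comm_right)
  have hne := normalize_add_normalize_ne_zero h
  rw [map_orthogonalProjection_sub_midpoint φ (right_mem_affineSpan_pair ℝ _ _)
    (direction_line_barycentricIncenter h) hne, map_add φ, add_div_conj_add_of_norm_eq_one hB hC]
  rw [← map_add]
  exact (map_ne_zero_iff φ φ.injective).2 hne

variable [Fact (Module.finrank ℝ V = 2)]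

lemma map_reflection_orthocenter_pedal_sub_midpoint (hABC : AffineIndependent ℝ ![A, B, C])
    (hI : I = barycentricIncenter A B C) (hA' : A' = orthogonalProjection line[ℝ, A, I] P)
    (hB' : B' = orthogonalProjection line[ℝ, B, I] P)
    (hC' : C' = orthogonalProjection line[ℝ, C, I] P) (h : AffineIndependent ℝ ![A', B', C']) :
    φ (reflection line[ℝ, B', C'] (Affine.Triangle.orthocenter ⟨![A', B', C'], h⟩) -
        midpoint ℝ I P) =
      φ (normalize (C - B)) ^ 2 * conj (φ (P - I)) / 2 := by
  have hBCA : AffineIndependent ℝ ![B, C, A] := hABC.comm_left.comm_right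
  have hCAB : AffineIndependent ℝ ![C, A, B] := hBCA.comm_left.comm_right
  have hdist (i : Fin 3) : dist (![A', B', C'] i) (midpoint ℝ I P) = dist I P / 2 := by
    have hpedal (X : V) :
        dist (orthogonalProjection line[ℝ, X, I] P : V) (midpoint ℝ I P) = dist I P / 2 :=
      dist_orthogonalProjection_midpoint (right_mem_affineSpan_pair ℝ _ _) P
    fin_cases i
    exacts [hA' ▸ hpedal A, hB' ▸ hpedal B, hC' ▸ hpedal C]
  refine (map_reflection_orthocenter_sub φ ⟨![A', B', C'], h⟩ hdist).trans ?_
  simp only [Matrix.cons_val]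
  rw [hA', hB', hC', map_orthogonalProjection_bisector_sub_midpoint φ hABC hI,
    map_orthogonalProjection_bisector_sub_midpoint φ hBCA
      (hI.trans (barycentricIncenter_rotate A B C).symm),
    map_orthogonalProjection_bisector_sub_midpoint φ hCAB
      (hI.trans (barycentricIncenter_rotate C A B)),
    ← neg_sub B A, ← neg_sub C A, ← neg_sub C B, normalize_neg, normalize_neg, normalize_neg,
    map_neg, map_neg, map_neg]
  have he : φ (normalize (B - A)) ≠ 0 := norm_ne_zero_iff.1 <|
    (norm_map_normalize φ (sub_ne_zero_of_affineIndependent hABC)).trans_ne one_ne_zero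
  have hf : φ (normalize (C - A)) ≠ 0 := norm_ne_zero_iff.1 <|
    (norm_map_normalize φ (sub_ne_zero_of_affineIndependent hABC.comm_right)).trans_ne one_ne_zero
  rcases eq_or_ne (conj (φ (P - I))) 0 with hq | hq
  · rw [hq]
    ring
  · field

lemma reflection_orthocenter_pedal_eq_orthogonalProjection
    (hABC : AffineIndependent ℝ ![A, B, C]) (hI : I = barycentricIncenter A B C)
    (hA' : A' = orthogonalProjection line[ℝ, A, I] P)
    (hB' : B' = orthogonalProjection line[ℝ, B, I] P)
    (hC' : C' = orthogonalProjection line[ℝ, C, I] P) (h : AffineIndependent ℝ ![A', B', C']) :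
    reflection line[ℝ, B', C'] (Affine.Triangle.orthocenter ⟨![A', B', C'], h⟩) =
      orthogonalProjection line[ℝ, I, I + (C - B)] P := by
  have hfin : FiniteDimensional ℝ V := .of_fact_finrank_eq_two
  let φ := (Complex.isometryOfOrthonormal <| (stdOrthonormalBasis ℝ V).reindex <|
    finCongr Fact.out).symm.toLinearIsometry
  have hBC : C - B ≠ 0 := sub_ne_zero_of_affineIndependent hABC.comm_left.comm_right
  refine sub_left_injective (b := midpoint ℝ I P) (φ.injective ?_)
  dsimp only
  rw [map_reflection_orthocenter_pedal_sub_midpoint φ hABC hI hA' hB' hC' h,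
    map_orthogonalProjection_sub_midpoint φ (left_mem_affineSpan_pair ℝ _ _)
      (direction_line_add I (C - B)) hBC,
    map_div_conj_map_eq_sq φ hBC]

end Pedal

theorem stmt6_general {V : Type*} [NormedAddCommGroup V] [InnerProductSpace ℝ V]
    [Fact (Module.finrank ℝ V = 2)] (A B C I P AP A' B' C' H' HA' : V)
    (hABC : AffineIndependent ℝ ![A, B, C]) (hI : I = barycentricIncenter A B C)
    (hAP : AP = orthogonalProjection line[ℝ, B, C] P)
    (hA' : A' = orthogonalProjection line[ℝ, A, I] P)
    (hB' : B' = orthogonalProjection line[ℝ, B, I] P)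
    (hC' : C' = orthogonalProjection line[ℝ, C, I] P)
    (hA'B'C' : AffineIndependent ℝ ![A', B', C'])
    (hH' : H' = Affine.Triangle.orthocenter ⟨![A', B', C'], hA'B'C'⟩)
    (hHA' : HA' = reflection line[ℝ, B', C'] H') :
    Collinear ℝ {P, AP, HA'} := by
  have hdir : line[ℝ, B, C].direction = ℝ ∙ (C - B) :=
    (direction_affineSpan ℝ _).trans (vectorSpan_pair_rev ℝ _ _)
  have hparallel : line[ℝ, B, C].direction = line[ℝ, I, I + (C - B)].direction :=
    hdir.trans (direction_line_add I (C - B)).symm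
  have hBC : C - B ≠ 0 := sub_ne_zero_of_affineIndependent hABC.comm_left.comm_right
  rw [hHA', hH', hAP,
    reflection_orthocenter_pedal_eq_orthogonalProjection hABC hI hA' hB' hC' hA'B'C']
  exact collinear_orthogonalProjection_of_direction_eq
    (by rw [hdir, finrank_span_singleton hBC]) hparallel P

theorem stmt6 (A B C I P AP A' B' C' H' HA' : Pt)
    (hABC : AffineIndependent ℝ ![A, B, C])
    (hI : I = incenter3 A B C)
    (hAP : AP = pedal P B C)
    (hA' : A' = pedal P A I) (hB' : B' = pedal P B I) (hC' : C' = pedal P C I)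
    (hA'B'C' : AffineIndependent ℝ ![A', B', C'])
    (hH' : H' = orthocenter3 A' B' C' hA'B'C')
    (hHA' : HA' = lineReflect B' C' H') :
    Collinear ℝ ({P, AP, HA'} : Set Pt) :=
  have : Fact (Module.finrank ℝ Pt = 2) := ⟨finrank_euclideanSpace_fin⟩
  stmt6_general A B C I P AP A' B' C' H' HA' hABC hI hAP hA' hB' hC' hA'B'C' hH' hHA'

end
end

section
/- Let ABC be a triangle with incenter I and circumcenter O, and let Be be the Bevan point of ABC, i.e., the point reflection of I across O. Let A', B', C' be the pedals of Be on lines AI, BI, CI, and assume A', B', C' are affinely independent. Then the orthocenter of triangle A'B'C' is the Nagel point of ABC. -/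
open EuclideanGeometry

noncomputable section

/-!
The Bevan point, the incenter and `ABC` are the circumcenter, the orthocenter and the orthic
triangle of the excentral triangle `XYZ`. Taking the orthocenter as origin, write `a, b, c` for the
feet and `x, y, z` for the vertices. The right angles at the feet give `⟪a, y⟫ = ⟪a, z⟫ = ‖a‖²` and
cyclically, and, since `x` is a multiple of `a`, all products `⟪x, y⟫`, `⟪y, z⟫`, `⟪z, x⟫`,
`⟪a, x⟫`, `⟪b, y⟫`, `⟪c, z⟫` coincide. Hence `(x + y + z) / 4` is equidistant from the feet, the
circumcenter of `XYZ` is `(x + y + z) / 2`, and its projections on the altitudes are `a + x / 2`,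
`b + y / 2`, `c + z / 2`. Expanding products shows that `a + b + c` is the orthocenter of these
three points; it is the Nagel point because the incenter, the centroid and the Nagel point satisfy
`N = 3G - 2I`.
-/

open scoped RealInnerProductSpace

theorem dist_lt_dist_add_dist_of_affineIndependent {V P : Type*} [NormedAddCommGroup V]
    [NormedSpace ℝ V] [StrictConvexSpace ℝ V] [MetricSpace P] [NormedAddTorsor V P] {A B C : P}
    (h : AffineIndependent ℝ ![A, B, C]) : dist A C < dist A B + dist B C :=
  dist_lt_dist_add_dist_iff.mpr fun hB ↦
    affineIndependent_iff_not_collinear_set.mp h hB.collinear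

section InnerProductSpace

variable {V P : Type*} [NormedAddCommGroup V] [InnerProductSpace ℝ V] [MetricSpace P]
  [NormedAddTorsor V P]

theorem inner_norm_smul_add_norm_smul_sub (u v : V) :
    ⟪‖v‖ • u + ‖u‖ • v, ‖v‖ • u - ‖u‖ • v⟫ = 0 :=
  (real_inner_add_sub_eq_zero_iff _ _).mpr (by simp only [norm_smul, norm_norm, mul_comm])

theorem mem_altitude_of_inner_eq_zero (t : Affine.Triangle ℝ P) {i j k : Fin 3} (hij : i ≠ j)
    (hik : i ≠ k) (hjk : j ≠ k) {p : P} (hp : p ∈ affineSpan ℝ (Set.range t.points))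
    (h : ⟪p -ᵥ t.points i, t.points j -ᵥ t.points k⟫ = 0) : p ∈ t.altitude i := by
  have compl_eq : ({i}ᶜ : Set (Fin 3)) = {j, k} := by
    ext x
    simp only [Set.mem_compl_iff, Set.mem_insert_iff, Set.mem_singleton_iff]
    lia
  rw [Affine.Simplex.altitude_def, AffineSubspace.mem_inf_iff, AffineSubspace.mem_mk', compl_eq,
    Set.image_pair, direction_affineSpan, vectorSpan_pair,
    Submodule.mem_orthogonal_singleton_iff_inner_left]
  exact ⟨h, hp⟩

end InnerProductSpace

section OrthicSystem

variable {ι V : Type*} [NormedAddCommGroup V] [InnerProductSpace ℝ V]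

/-- The feet `p i` of the altitudes of a simplex with vertices `q i` and orthocenter `H`: each foot
lies on the line of its vertex and `H`, and is joined to the other vertices by segments
perpendicular to that line. The line is encoded as `line[ℝ, p i, H]`, which for `p i = H` is a
single point, so right triangles are excluded. -/
structure IsOrthicSystem (H : V) (p q : ι → V) : Prop where
  vertex_mem_line (i : ι) : q i ∈ line[ℝ, p i, H]
  inner_foot_sub_vertex {i j : ι} (hij : i ≠ j) : ⟪p i - H, q j - p i⟫ = 0

namespace IsOrthicSystem

/-- The nine-point center of a triangle, from its orthocenter `H` and its vertices `q`. -/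
def ninePointCenter (H : V) (q : Fin 3 → V) : V :=
  H + (1 / 4 : ℝ) • ∑ k, (q k - H)

/-- The circumcenter of a triangle, from its orthocenter `H` and its vertices `q`: the reflection of
`H` in the nine-point center. -/
def circumcenter (H : V) (q : Fin 3 → V) : V :=
  H + (1 / 2 : ℝ) • ∑ k, (q k - H)

/-- The projection of the circumcenter on the altitude through `q i`, from the orthocenter `H` and
the altitude feet `p`. -/
def circumcenterFoot (H : V) (p q : ι → V) (i : ι) : V :=
  p i + (1 / 2 : ℝ) • (q i - H)

theorem two_smul_ninePointCenter_sub (H : V) (q : Fin 3 → V) :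
    (2 : ℝ) • ninePointCenter H q - H = circumcenter H q := by
  unfold ninePointCenter circumcenter
  module

variable {H : V} {p q : ι → V}

theorem inner_foot_vertex (h : IsOrthicSystem H p q) {i j : ι} (hij : i ≠ j) :
    ⟪p i - H, q j - H⟫ = ‖p i - H‖ ^ 2 := by
  rw [← sub_add_sub_cancel (q j) (p i) H, inner_add_right, h.inner_foot_sub_vertex hij, zero_add,
    real_inner_self_eq_norm_sq]

theorem inner_vertex_vertex (h : IsOrthicSystem H p q) {i j : ι} (hij : i ≠ j) :
    ⟪q i - H, q j - H⟫ = ⟪p i - H, q i - H⟫ := by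
  have vertex_mem : (q i - H) +ᵥ H ∈ line[ℝ, p i, H] := by simpa using h.vertex_mem_line i
  obtain ⟨t, ht : t • (p i - H) = q i - H⟩ := vadd_right_mem_affineSpan_pair.mp vertex_mem
  rw [← ht, real_inner_smul_left, real_inner_smul_right, h.inner_foot_vertex hij,
    real_inner_self_eq_norm_sq]

theorem inner_foot_vertex_self_eq (h : IsOrthicSystem H p q) (i j : ι) :
    ⟪p i - H, q i - H⟫ = ⟪p j - H, q j - H⟫ := by
  obtain rfl | hij := eq_or_ne i j
  · rfl
  · rw [← h.inner_vertex_vertex hij, ← h.inner_vertex_vertex hij.symm, real_inner_comm]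

theorem inner_foot_sum_vertex [Fintype ι] (h : IsOrthicSystem H p q) (i : ι) :
    ⟪p i - H, ∑ j, (q j - H)⟫ =
      ⟪p i - H, q i - H⟫ + (Fintype.card ι - 1) * ‖p i - H‖ ^ 2 := by
  classical
  rw [inner_sum, ← Finset.add_sum_erase _ _ (Finset.mem_univ i),
    Finset.sum_congr rfl fun j hj ↦ h.inner_foot_vertex (Finset.ne_of_mem_erase hj).symm,
    Finset.sum_const, Finset.card_erase_of_mem (Finset.mem_univ i), Finset.card_univ, nsmul_eq_mul,
    Nat.cast_pred (Fintype.card_pos_iff.mpr ⟨i⟩)]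

theorem dist_foot_ninePointCenter_eq {p q : Fin 3 → V} (h : IsOrthicSystem H p q) (i j : Fin 3) :
    dist (p i) (ninePointCenter H q) = dist (p j) (ninePointCenter H q) := by
  have norm_sq (i : Fin 3) : ‖p i - H - (1 / 4 : ℝ) • ∑ k, (q k - H)‖ ^ 2 =
      ‖(1 / 4 : ℝ) • ∑ k, (q k - H)‖ ^ 2 - 1 / 2 * ⟪p i - H, q i - H⟫ := by
    rw [norm_sub_sq_real, real_inner_smul_right, h.inner_foot_sum_vertex, Fintype.card_fin]
    push_cast
    ring
  rw [ninePointCenter, dist_eq_norm, dist_eq_norm, ← sub_sub, ← sub_sub,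
    ← sq_eq_sq₀ (norm_nonneg _) (norm_nonneg _), norm_sq, norm_sq, h.inner_foot_vertex_self_eq i j]

theorem inner_circumcenter_sub_circumcenterFoot {p q : Fin 3 → V} (h : IsOrthicSystem H p q)
    (i : Fin 3) : ⟪circumcenter H q - circumcenterFoot H p q i, p i - H⟫ = 0 := by
  have expand : circumcenter H q - circumcenterFoot H p q i =
      (1 / 2 : ℝ) • ∑ k, (q k - H) - (p i - H) - (1 / 2 : ℝ) • (q i - H) := by
    unfold circumcenter circumcenterFoot
    abel
  rw [expand, real_inner_comm, inner_sub_right, inner_sub_right, real_inner_smul_right,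
    real_inner_smul_right, h.inner_foot_sum_vertex, real_inner_self_eq_norm_sq, Fintype.card_fin]
  push_cast
  ring

theorem circumcenterFoot_mem_line (h : IsOrthicSystem H p q) (i : ι) :
    circumcenterFoot H p q i ∈ line[ℝ, p i, H] := by
  rw [circumcenterFoot, add_comm]
  exact AffineSubspace.vadd_mem_of_mem_direction
    (Submodule.smul_mem _ _ (AffineSubspace.vsub_mem_direction (h.vertex_mem_line i)
      (right_mem_affineSpan_pair ℝ _ _)))
    (left_mem_affineSpan_pair ℝ _ _)

theorem inner_sub_circumcenterFoot_circumcenterFoot_sub (h : IsOrthicSystem H p q) {i j k : ι}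
    (hij : i ≠ j) (hik : i ≠ k) (hjk : j ≠ k) :
    ⟪p i + p j + p k - (2 : ℝ) • H - circumcenterFoot H p q i,
      circumcenterFoot H p q j - circumcenterFoot H p q k⟫ = 0 := by
  have expand_left : p i + p j + p k - (2 : ℝ) • H - circumcenterFoot H p q i =
      (p j - H) + (p k - H) - (1 / 2 : ℝ) • (q i - H) := by
    unfold circumcenterFoot
    module
  have expand_right : circumcenterFoot H p q j - circumcenterFoot H p q k =
      (p j - H) - (p k - H) + (1 / 2 : ℝ) • ((q j - H) - (q k - H)) := by
    unfold circumcenterFoot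
    module
  have vertices : ⟪q i - H, q j - H⟫ = ⟪q i - H, q k - H⟫ :=
    (h.inner_vertex_vertex hij).trans (h.inner_vertex_vertex hik).symm
  have foot_j := h.inner_foot_vertex hij.symm
  have foot_k := h.inner_foot_vertex hik.symm
  have foot_jk := h.inner_foot_vertex hjk
  have foot_kj := h.inner_foot_vertex hjk.symm
  have power := h.inner_foot_vertex_self_eq j k
  rw [← real_inner_self_eq_norm_sq] at foot_j foot_k foot_jk foot_kj
  rw [expand_left, expand_right]
  generalize p j - H = b, p k - H = c, q i - H = x, q j - H = y, q k - H = z at *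
  simp only [inner_add_left, inner_add_right, inner_sub_left, inner_sub_right,
    real_inner_smul_left, real_inner_smul_right, real_inner_comm b x, real_inner_comm c x,
    real_inner_comm b c]
  linear_combination (1 / 2 : ℝ) * (power - foot_jk + foot_kj - foot_j + foot_k) -
    (1 / 4 : ℝ) * vertices

end IsOrthicSystem

end OrthicSystem

section Plane

variable {A B C P Q X Y : Pt}

theorem affineSpan_triangle_eq_top (h : AffineIndependent ℝ ![A, B, C]) :
    affineSpan ℝ (Set.range ![A, B, C]) = ⊤ :=
  h.affineSpan_eq_top_iff_card_eq_finrank_add_one.mpr (by simp)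

theorem circumcenter3_eq_of_dist_eq (h : AffineIndependent ℝ ![A, B, C])
    (hB : dist A P = dist B P) (hC : dist A P = dist C P) : circumcenter3 A B C h = P := by
  refine ((⟨![A, B, C], h⟩ : Affine.Triangle ℝ Pt).eq_circumcenter_of_dist_eq
    (r := dist A P) ?_ ?_).symm
  · exact affineSpan_triangle_eq_top h ▸ AffineSubspace.mem_top ℝ Pt P
  · simp [Fin.forall_fin_succ, ← hB, ← hC]

theorem orthocenter3_eq_of_inner_eq_zero (h : AffineIndependent ℝ ![A, B, C])
    (hA : ⟪P - A, B - C⟫ = 0) (hB : ⟪P - B, C - A⟫ = 0) : orthocenter3 A B C h = P := by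
  have hP : P ∈ affineSpan ℝ (Set.range ![A, B, C]) :=
    affineSpan_triangle_eq_top h ▸ AffineSubspace.mem_top ℝ Pt P
  exact (Affine.Triangle.eq_orthocenter_of_forall_mem_altitude (i₁ := 0) (i₂ := 1) (by decide)
    (mem_altitude_of_inner_eq_zero ⟨_, h⟩ (j := 1) (k := 2)
      (by decide) (by decide) (by decide) hP hA)
    (mem_altitude_of_inner_eq_zero ⟨_, h⟩ (j := 2) (k := 0)
      (by decide) (by decide) (by decide) hP hB)).symm

theorem pedal_eq_of_inner_eq_zero (hQ : Q ∈ line[ℝ, X, Y]) (h : ⟪P - Q, X - Y⟫ = 0) :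
    pedal P X Y = Q := by
  refine coe_orthogonalProjection_eq_iff_mem.mpr ⟨hQ, ?_⟩
  rwa [direction_affineSpan, vectorSpan_pair, Submodule.mem_orthogonal_singleton_iff_inner_left]

theorem perimeter_pos (h : AffineIndependent ℝ ![A, B, C]) :
    0 < dist B C + dist C A + dist A B := by
  linarith [dist_lt_dist_add_dist_of_affineIndependent h, dist_comm A C,
    dist_nonneg (x := A) (y := C)]

theorem dist_add_dist_sub_dist_pos (h : AffineIndependent ℝ ![A, B, C]) :
    0 < dist C A + dist A B - dist B C := by
  linarith [dist_lt_dist_add_dist_of_affineIndependent h.comm_left, dist_comm A B, dist_comm A C]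

theorem nagelPoint_eq (h : AffineIndependent ℝ ![A, B, C]) :
    nagelPoint A B C = A + B + C - (2 : ℝ) • incenter3 A B C := by
  have hs := (perimeter_pos h).ne'
  unfold nagelPoint incenter3
  match_scalars <;> field

/-- The excenter of the triangle `ABC` opposite to `A`, a vertex of the excentral triangle, in the
barycentric form `(b•B + c•C - a•A)/(b+c-a)`; if `b + c = a`, which affine independence excludes,
it is `0`. -/
def excenter3 (A B C : Pt) : Pt :=
  (dist C A + dist A B - dist B C)⁻¹ • (dist C A • B + dist A B • C - dist B C • A)

/-- The vertices of the excentral triangle of `ABC`, listed so that they form an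
orthic system with the feet `![A, B, C]`. -/
def excenters (A B C : Pt) : Fin 3 → Pt :=
  ![excenter3 A B C, excenter3 B C A, excenter3 C A B]

theorem incenter3_rotate (A B C : Pt) : incenter3 B C A = incenter3 A B C := by
  unfold incenter3
  congr 1
  · congr 1
    ring
  · abel

theorem incenter3_swap (A B C : Pt) : incenter3 A C B = incenter3 A B C := by
  unfold incenter3
  simp only [dist_comm C B, dist_comm B A, dist_comm A C]
  congr 1
  · congr 1
    ring
  · abel

theorem excenter3_swap (A B C : Pt) : excenter3 A C B = excenter3 A B C := by
  unfold excenter3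
  simp only [dist_comm C B, dist_comm B A, dist_comm A C]
  congr 1
  · congr 1
    ring
  · abel

theorem excenter3_mem_line_incenter3 (h : AffineIndependent ℝ ![A, B, C]) :
    excenter3 A B C ∈ line[ℝ, A, incenter3 A B C] := by
  have hs := (perimeter_pos h).ne'
  have ha := (dist_add_dist_sub_dist_pos h).ne'
  have eq_lineMap : excenter3 A B C = AffineMap.lineMap A (incenter3 A B C)
      ((dist B C + dist C A + dist A B) / (dist C A + dist A B - dist B C)) := by
    rw [AffineMap.lineMap_apply_module]
    unfold excenter3 incenter3
    match_scalars <;> field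
  rw [eq_lineMap]
  exact AffineMap.lineMap_mem_affineSpan_pair _ _ _

theorem inner_sub_incenter3_excenter3_sub_left (h : AffineIndependent ℝ ![A, B, C]) :
    ⟪B - incenter3 A B C, excenter3 A B C - B⟫ = 0 := by
  have hs := (perimeter_pos h).ne'
  have ha := (dist_add_dist_sub_dist_pos h).ne'
  have internal : B - incenter3 A B C = -(dist B C + dist C A + dist A B)⁻¹ •
      (dist A B • (C - B) + dist B C • (A - B)) := by
    unfold incenter3
    match_scalars <;> field
  have external : excenter3 A B C - B = (dist C A + dist A B - dist B C)⁻¹ •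
      (dist A B • (C - B) - dist B C • (A - B)) := by
    unfold excenter3
    match_scalars <;> field
  rw [internal, external, real_inner_smul_left, real_inner_smul_right, dist_eq_norm A B,
    dist_comm B C, dist_eq_norm C B, inner_norm_smul_add_norm_smul_sub, mul_zero, mul_zero]

theorem inner_sub_incenter3_excenter3_sub_right (h : AffineIndependent ℝ ![A, B, C]) :
    ⟪C - incenter3 A B C, excenter3 A B C - C⟫ = 0 := by
  simpa only [incenter3_swap, excenter3_swap] using
    inner_sub_incenter3_excenter3_sub_left h.comm_right

theorem isOrthicSystem_excenters (h : AffineIndependent ℝ ![A, B, C]) :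
    IsOrthicSystem (incenter3 A B C) ![A, B, C] (excenters A B C) := by
  have hB : AffineIndependent ℝ ![B, C, A] := h.comm_left.comm_right
  have hC : AffineIndependent ℝ ![C, A, B] := h.comm_right.comm_left
  have incenter_B : incenter3 B C A = incenter3 A B C := incenter3_rotate A B C
  have incenter_C : incenter3 C A B = incenter3 A B C := (incenter3_rotate B C A).trans incenter_B
  have line_B := excenter3_mem_line_incenter3 hB
  have line_C := excenter3_mem_line_incenter3 hC
  have right_angle_BC := inner_sub_incenter3_excenter3_sub_left hB
  have right_angle_BA := inner_sub_incenter3_excenter3_sub_right hB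
  have right_angle_CA := inner_sub_incenter3_excenter3_sub_left hC
  have right_angle_CB := inner_sub_incenter3_excenter3_sub_right hC
  rw [incenter_B] at line_B right_angle_BC right_angle_BA
  rw [incenter_C] at line_C right_angle_CA right_angle_CB
  refine ⟨fun i ↦ ?_, fun {i j} hij ↦ ?_⟩
  · fin_cases i
    exacts [excenter3_mem_line_incenter3 h, line_B, line_C]
  · fin_cases i <;> fin_cases j
    exacts [absurd rfl hij, right_angle_BA, right_angle_CA,
      inner_sub_incenter3_excenter3_sub_left h, absurd rfl hij, right_angle_CB,
      inner_sub_incenter3_excenter3_sub_right h, right_angle_BC, absurd rfl hij]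

theorem circumcenter3_eq_ninePointCenter_excenters (h : AffineIndependent ℝ ![A, B, C]) :
    circumcenter3 A B C h =
      IsOrthicSystem.ninePointCenter (incenter3 A B C) (excenters A B C) :=
  have orthic := isOrthicSystem_excenters h
  circumcenter3_eq_of_dist_eq h (orthic.dist_foot_ninePointCenter_eq 0 1)
    (orthic.dist_foot_ninePointCenter_eq 0 2)

theorem IsOrthicSystem.pedal_circumcenter {H : Pt} {p q : Fin 3 → Pt}
    (h : IsOrthicSystem H p q) (i : Fin 3) :
    pedal (circumcenter H q) (p i) H = circumcenterFoot H p q i :=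
  pedal_eq_of_inner_eq_zero (h.circumcenterFoot_mem_line i)
    (h.inner_circumcenter_sub_circumcenterFoot i)

end Plane

theorem stmt13 (A B C I O Be A' B' C' : Pt)
    (hABC : AffineIndependent ℝ ![A, B, C])
    (hI : I = incenter3 A B C)
    (hO : O = circumcenter3 A B C hABC)
    (hBe : Be = (2 : ℝ) • O - I)
    (hA' : A' = pedal Be A I) (hB' : B' = pedal Be B I) (hC' : C' = pedal Be C I)
    (hA'B'C' : AffineIndependent ℝ ![A', B', C']) :
    orthocenter3 A' B' C' hA'B'C' = nagelPoint A B C := by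
  have orthic := isOrthicSystem_excenters hABC
  rw [← hI] at orthic
  have bevan : Be = IsOrthicSystem.circumcenter I (excenters A B C) := by
    rw [hBe, hO, circumcenter3_eq_ninePointCenter_excenters, ← hI,
      IsOrthicSystem.two_smul_ninePointCenter_sub]
  rw [bevan] at hA' hB' hC'
  have foot_A := hA'.trans (orthic.pedal_circumcenter 0)
  have foot_B := hB'.trans (orthic.pedal_circumcenter 1)
  have foot_C := hC'.trans (orthic.pedal_circumcenter 2)
  rw [nagelPoint_eq hABC, ← hI]
  apply orthocenter3_eq_of_inner_eq_zero
  · rw [foot_A, foot_B, foot_C]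
    exact orthic.inner_sub_circumcenterFoot_circumcenterFoot_sub (i := 0) (j := 1) (k := 2)
      (by decide) (by decide) (by decide)
  · rw [foot_A, foot_B, foot_C, add_rotate]
    exact orthic.inner_sub_circumcenterFoot_circumcenterFoot_sub (i := 1) (j := 2) (k := 0)
      (by decide) (by decide) (by decide)

end
end
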